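/- arXiv:2002.07889 — 5 statements merged into one kernel-verified Lean document; each statement's English description precedes it below -/
import Mathlib

section
/- Let N ≥ 4 and let f be a map from size-N multisets of real numbers to ℝ (a non-identifying facility location mechanism on N reported locations). Suppose f is strategyproof w.r.t. manipulation: for every size-N multiset split as A + B (A the true locations controlled by one agent, B the locations of the others) and every multiset A′ of real numbers with |A′| = |A|, one has l(f(A + B), A) ≤ l(f(A′ + B), A). Then f is constant: there exists c ∈ ℝ with f(S) = c for every size-N multiset S of reals. -/
/-- The loss of a finite multiset `S` of reals at a point `x`:
`l(x,S) = ∑_{y ∈ S} |x - y|` (with multiplicity). -/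
noncomputable def loss (x : ℝ) (S : Multiset ℝ) : ℝ :=
  (S.map fun y => |x - y|).sum

/-- Left endpoint `t_⌈k/2⌉` of the median interval of a (nonempty) multiset of reals. -/
noncomputable def medLo (S : Multiset ℝ) : ℝ :=
  (S.sort (· ≤ ·)).getD ((S.card - 1) / 2) 0

/-- Right endpoint `t_{⌊k/2⌋+1}` of the median interval of a (nonempty) multiset of reals. -/
noncomputable def medHi (S : Multiset ℝ) : ℝ :=
  (S.sort (· ≤ ·)).getD (S.card / 2) 0

/-!
Two reports at a point `a` of the range of `f` already force the outcome `a`. If everyone reports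
`a`, the outcome is `a`: otherwise the agent controlling all locations, all of them at `a`, would
gain by misreporting. Now replace the reports `a` by other values one at a time: an agent holding
`p ≥ 2` locations at `a` and one at `b` has `a` as unique optimum, and attains it by reporting `a`
in place of `b`, so the outcome stays `a` as long as two reports at `a` remain. Four reports leave
room for two such pairs, at any two points of the range.
-/

section

open Multiset

variable {X : Type*}

/-- The loss of a finite multiset `S` of points of a metric space at `x`: the sum of the distances
from `x` to the members of `S`, with multiplicity. On `ℝ` it unfolds to `loss`. -/
noncomputable def distLoss [PseudoMetricSpace X] (x : X) (S : Multiset X) : ℝ :=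
  (S.map fun y => dist x y).sum

/-- A non-identifying mechanism `f` on `N` reported locations is strategyproof if no agent, whose
true locations are `A` while the others report `B`, lowers her loss by reporting `A'` in place
of `A`. -/
def IsStrategyproof [PseudoMetricSpace X] (N : ℕ) (f : Multiset X → X) : Prop :=
  ∀ A B A' : Multiset X, (A + B).card = N → A'.card = A.card →
    distLoss (f (A + B)) A ≤ distLoss (f (A' + B)) A

theorem distLoss_replicate_add [PseudoMetricSpace X] (x a : X) (p : ℕ) (R : Multiset X) :
    distLoss x (replicate p a + R) = p * dist x a + distLoss x R := by
  simp [distLoss]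

theorem distLoss_le_card_mul_dist_add [PseudoMetricSpace X] (x y : X) (S : Multiset X) :
    distLoss x S ≤ S.card * dist x y + distLoss y S :=
  calc distLoss x S
      ≤ (S.map fun z => dist x y + dist y z).sum :=
        sum_map_le_sum_map _ _ fun z _ => dist_triangle x y z
    _ = S.card * dist x y + distLoss y S := by
        simp [distLoss, sum_map_add]

theorem eq_of_distLoss_le_of_card_lt [MetricSpace X] {x a : X} {p : ℕ} {R : Multiset X}
    (hR : R.card < p)
    (hle : distLoss x (replicate p a + R) ≤ distLoss a (replicate p a + R)) : x = a := by
  have hpR : (0 : ℝ) < p - R.card := sub_pos.mpr (mod_cast hR)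
  have excess : (p - R.card : ℝ) * dist x a ≤ 0 := by
    have transfer := distLoss_le_card_mul_dist_add a x R
    rw [dist_comm] at transfer
    simp only [distLoss_replicate_add, dist_self, mul_zero, zero_add] at hle
    linarith
  exact dist_le_zero.mp (nonpos_of_mul_nonpos_right excess hpR)

namespace IsStrategyproof

variable [MetricSpace X] {N : ℕ} {f : Multiset X → X}

theorem apply_eq_of_manipulation (hf : IsStrategyproof N f) {a : X} {p : ℕ}
    {Q A' B : Multiset X} (hQ : Q.card < p) (hN : (replicate p a + Q + B).card = N)
    (hA' : A'.card = p + Q.card) (ha : f (A' + B) = a) : f (replicate p a + Q + B) = a := by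
  refine eq_of_distLoss_le_of_card_lt hQ ?_
  have hle := hf (replicate p a + Q) B A' hN (by simpa using hA')
  rwa [ha] at hle

theorem apply_replicate_add_of_two_le (hf : IsStrategyproof N f) {T : Multiset X} (hT : T.card = N)
    {p : ℕ} (hp : 2 ≤ p) {R : Multiset X} (hN : p + R.card = N) :
    f (replicate p (f T) + R) = f T := by
  induction R using Multiset.induction generalizing p with
  | empty =>
    have hpN : p = N := by simpa using hN
    simpa using hf.apply_eq_of_manipulation (p := p) (Q := 0) (A' := T) (B := 0)
      (by simp; omega) (by simpa using hpN) (by simp [hT, hpN]) (by simp)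
  | cons b R ih =>
    rw [card_cons] at hN
    have previous : f (replicate (p + 1) (f T) + R) = f T := ih (by omega) (by omega)
    rw [← singleton_add, ← add_assoc]
    exact hf.apply_eq_of_manipulation (Nat.lt_of_succ_le hp) (by simp; omega) (by simp) previous

theorem apply_eq_apply (hf : IsStrategyproof N f) (hN : 4 ≤ N) {S T : Multiset X}
    (hS : S.card = N) (hT : T.card = N) : f S = f T := by
  let R := replicate (N - 4) (f T)
  calc f S
      = f (replicate 2 (f S) + (replicate 2 (f T) + R)) :=
        (hf.apply_replicate_add_of_two_le hS le_rfl (by simp [R]; omega)).symm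
    _ = f (replicate 2 (f T) + (replicate 2 (f S) + R)) := by rw [add_left_comm]
    _ = f T := hf.apply_replicate_add_of_two_le hT le_rfl (by simp [R]; omega)

end IsStrategyproof

theorem stmt_1_general [MetricSpace X] (N : ℕ) (hN : 4 ≤ N) (f : Multiset X → X)
    (hsp : IsStrategyproof N f) : ∃ c : X, ∀ S : Multiset X, S.card = N → f S = c :=
  ⟨f (replicate N (f 0)), fun _ hS => hsp.apply_eq_apply hN hS (card_replicate _ _)⟩

end

/-- with non-identifying locations, any mechanism on  reported
locations that is strategyproof w.r.t. manipulation must be constant. -/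
theorem stmt_1 (N : ℕ) (hN : 4 ≤ N) (f : Multiset ℝ → ℝ)
    (hsp : ∀ A B A' : Multiset ℝ, (A + B).card = N → A'.card = A.card →
      loss (f (A + B)) A ≤ loss (f (A' + B)) A) :
    ∃ c : ℝ, ∀ S : Multiset ℝ, S.card = N → f S = c :=
  stmt_1_general N hN f hsp
end

section
/- Let π be a mechanism for n agents (each reporting a nonempty finite multiset of reals) that is anonymous and strategyproof w.r.t. manipulation, replication, and hiding. Then for every agent i, every fixed tuple D_{−i} of the other agents' reports, and all reals y0 ≤ y1, one of the following holds: either π(D_i, D_{−i}) ∈ [y0,y1] for every nonempty finite multiset D_i with med(D_i) = [y0,y1]; or there exist s, h ∈ ℝ with (s < y0 ≤ y1 < h or s = h) such that for every nonempty finite multiset D_i with med(D_i) = [y0,y1]: π(D_i,D_{−i}) = s if l(s,D_i) < l(h,D_i), π(D_i,D_{−i}) = h if l(s,D_i) > l(h,D_i), and π(D_i,D_{−i}) ∈ {s,h} if l(s,D_i) = l(h,D_i). -/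
/-- A mechanism is anonymous if its value is invariant under every permutation of the
agents' reported multisets (on profiles of nonempty multisets). -/
def Anonymous (n : ℕ) (π : (Fin n → Multiset ℝ) → ℝ) : Prop :=
  ∀ D : Fin n → Multiset ℝ, (∀ j, D j ≠ 0) →
    ∀ σ : Equiv.Perm (Fin n), π (D ∘ σ) = π D

/-- A mechanism is strategyproof w.r.t. manipulation, replication and hiding if no agent
can strictly decrease her loss by replacing her report with an arbitrary nonempty
finite multiset. -/
def Strategyproof (n : ℕ) (π : (Fin n → Multiset ℝ) → ℝ) : Prop :=
  ∀ (i : Fin n) (D : Fin n → Multiset ℝ), (∀ j, D j ≠ 0) →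
    ∀ Di' : Multiset ℝ, Di' ≠ 0 →
      loss (π D) (D i) ≤ loss (π (Function.update D i Di')) (D i)

/-- A mechanism is efficient if its output is always Pareto optimal. -/
def Efficient (n : ℕ) (π : (Fin n → Multiset ℝ) → ℝ) : Prop :=
  ∀ D : Fin n → Multiset ℝ, (∀ j, D j ≠ 0) →
    ¬ ∃ x : ℝ, (∀ j, loss x (D j) ≤ loss (π D) (D j)) ∧
        ∃ j, loss x (D j) < loss (π D) (D j)

/-!
Fix the other agents' reports and let the menu be the set of outcomes agent `i` can induce. By
strategyproofness, the outcome of each report `S` minimises `loss · S` over the menu. This loss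
strictly decreases up to the median interval of `S`, strictly increases after it, and is smaller
inside it than outside. So if the menu meets the interval `[y0, y1]`, every report with that median
interval has its outcome there. Otherwise such an outcome is either the greatest menu point below
`y0` or the least menu point above `y1`, and the agent gets the better of the two.
-/

open Set Function

section Counting

theorem card_sub_le_countP_of_le_getD_sort {α : Type*} [LinearOrder α] {S : Multiset α} {m : ℕ}
    {x d : α} (hm : m < S.card) (hx : x ≤ (S.sort (· ≤ ·)).getD m d) :
    S.card - m ≤ S.countP (x ≤ ·) := by
  have hsorted : (S.sort (· ≤ ·)).Pairwise (· ≤ ·) := S.pairwise_sort (· ≤ ·)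
  have hcount : S.countP (x ≤ ·) = (S.sort (· ≤ ·)).countP (x ≤ ·) := by
    rw [← Multiset.coe_countP, Multiset.sort_eq]
  rw [hcount, ← Multiset.length_sort (r := (· ≤ ·)) (s := S)]
  rw [← Multiset.length_sort (r := (· ≤ ·)) (s := S)] at hm
  generalize S.sort (· ≤ ·) = L at *
  rw [List.getD_eq_getElem _ _ hm] at hx
  have hdrop : ∀ a ∈ L.drop m, x ≤ a := by
    have htail := hsorted.drop (i := m)
    rw [List.drop_eq_getElem_cons hm] at htail ⊢
    exact List.forall_mem_cons.2 ⟨hx, fun a ha => hx.trans (List.rel_of_pairwise_cons htail ha)⟩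
  calc L.length - m = (L.drop m).length := List.length_drop.symm
    _ = (L.drop m).countP (x ≤ ·) := (List.countP_eq_length.2 (by simpa using hdrop)).symm
    _ ≤ L.countP (x ≤ ·) := (L.drop_sublist m).countP_le

variable {S : Multiset ℝ} {x : ℝ}

theorem card_lt_two_mul_countP_of_le_medLo (hS : S ≠ 0) (hx : x ≤ medLo S) :
    S.card < 2 * S.countP (x ≤ ·) := by
  have hcard : 0 < S.card := Multiset.card_pos.2 hS
  have := card_sub_le_countP_of_le_getD_sort (by omega) hx
  omega

theorem card_le_two_mul_countP_of_le_medHi (hS : S ≠ 0) (hx : x ≤ medHi S) :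
    S.card ≤ 2 * S.countP (x ≤ ·) := by
  have hcard : 0 < S.card := Multiset.card_pos.2 hS
  have := card_sub_le_countP_of_le_getD_sort (by omega) hx
  omega

end Counting

section Reflection

theorem sort_map_of_antitone {α β : Type*} [LinearOrder α] [LinearOrder β] {f : α → β}
    (hf : Antitone f) (S : Multiset α) :
    (S.map f).sort (· ≤ ·) = ((S.sort (· ≤ ·)).map f).reverse := by
  refine List.Perm.eq_of_pairwise' (Multiset.pairwise_sort _ _) ?_ (Multiset.coe_eq_coe.1 ?_)
  · rw [List.pairwise_reverse, List.pairwise_map]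
    exact (S.pairwise_sort (· ≤ ·)).imp fun h => hf h
  · rw [Multiset.sort_eq, Multiset.coe_reverse, ← Multiset.map_coe, Multiset.sort_eq]

variable {S : Multiset ℝ}

theorem loss_neg_map_neg (x : ℝ) (S : Multiset ℝ) : loss (-x) (S.map (-·)) = loss x S := by
  simp only [loss, Multiset.map_map, comp_apply, neg_sub_neg, abs_sub_comm]

theorem medLo_map_neg (hS : S ≠ 0) : medLo (S.map (-·)) = -medHi S := by
  have hcard : 0 < S.card := Multiset.card_pos.2 hS
  have hindex : S.card - 1 - (S.card - 1) / 2 = S.card / 2 := by omega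
  have hlength : (((S.sort (· ≤ ·)).map (-·)).reverse).length = S.card := by simp
  rw [medLo, medHi, sort_map_of_antitone fun _ _ => neg_le_neg, Multiset.card_map,
    List.getD_eq_getElem _ _ (by rw [hlength]; omega),
    List.getD_eq_getElem _ _ (by rw [Multiset.length_sort]; omega)]
  simp [hindex]

theorem medHi_map_neg (hS : S ≠ 0) : medHi (S.map (-·)) = -medLo S := by
  simpa using congrArg Neg.neg (medLo_map_neg (S := S.map (-·)) (by simpa using hS)).symm

end Reflection

section Loss

theorem mul_countP_sub_card_le_loss_sub_loss {x z : ℝ} (hxz : x ≤ z) (S : Multiset ℝ) :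
    (z - x) * (2 * S.countP (z ≤ ·) - S.card) ≤ loss x S - loss z S := by
  induction S using Multiset.induction with
  | empty => simp [loss]
  | cons a S ih =>
    have hloss : ∀ w, loss w (a ::ₘ S) = |w - a| + loss w S := fun w => by simp [loss]
    rw [hloss, hloss, Multiset.countP_cons, Multiset.card_cons]
    split_ifs with hza
    · rw [abs_of_nonpos (sub_nonpos.2 (hxz.trans hza)), abs_of_nonpos (sub_nonpos.2 hza)]
      push_cast
      linarith
    · have habs : |z - a| - |x - a| ≤ z - x := by
        simpa [abs_of_nonneg (sub_nonneg.2 hxz)] using abs_sub_abs_le_abs_sub (z - a) (x - a)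
      push_cast
      linarith

variable {S : Multiset ℝ} {x z : ℝ}

theorem strictAntiOn_loss_Iic_medLo (hS : S ≠ 0) : StrictAntiOn (loss · S) (Iic (medLo S)) := by
  intro x _ z hz hxz
  have hcount : (S.card : ℝ) < 2 * S.countP (z ≤ ·) :=
    mod_cast card_lt_two_mul_countP_of_le_medLo hS hz
  exact sub_pos.1 <| (mul_pos (sub_pos.2 hxz) (sub_pos.2 hcount)).trans_le <|
    mul_countP_sub_card_le_loss_sub_loss hxz.le S

theorem antitoneOn_loss_Iic_medHi (hS : S ≠ 0) : AntitoneOn (loss · S) (Iic (medHi S)) := by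
  intro x _ z hz hxz
  have hcount : (S.card : ℝ) ≤ 2 * S.countP (z ≤ ·) :=
    mod_cast card_le_two_mul_countP_of_le_medHi hS hz
  exact sub_nonneg.1 <| (mul_nonneg (sub_nonneg.2 hxz) (sub_nonneg.2 hcount)).trans <|
    mul_countP_sub_card_le_loss_sub_loss hxz S

theorem strictMonoOn_loss_Ici_medHi (hS : S ≠ 0) : StrictMonoOn (loss · S) (Ici (medHi S)) := by
  intro x hx z hz hxz
  have hneg := strictAntiOn_loss_Iic_medLo (S := S.map (-·)) (by simpa using hS)
  rw [medLo_map_neg hS] at hneg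
  simpa only [loss_neg_map_neg] using
    hneg (neg_le_neg (mem_Ici.1 hz)) (neg_le_neg (mem_Ici.1 hx)) (neg_lt_neg hxz)

theorem loss_lt_loss_of_lt_medLo (hS : S ≠ 0) (hx : x < medLo S)
    (hz : z ∈ Icc (medLo S) (medHi S)) : loss z S < loss x S :=
  (antitoneOn_loss_Iic_medHi hS (hz.1.trans hz.2) hz.2 hz.1).trans_lt
    (strictAntiOn_loss_Iic_medLo hS hx.le self_mem_Iic hx)

theorem loss_lt_loss_of_medHi_lt (hS : S ≠ 0) (hx : medHi S < x)
    (hz : z ∈ Icc (medLo S) (medHi S)) : loss z S < loss x S := by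
  rw [← loss_neg_map_neg z, ← loss_neg_map_neg x]
  apply loss_lt_loss_of_lt_medLo (by simpa using hS)
  · simpa [medLo_map_neg hS] using hx
  · simpa [medLo_map_neg hS, medHi_map_neg hS, and_comm] using hz

end Loss

section Minimizers

theorem isGreatest_inter_of_isMinOn {α β : Type*} [LinearOrder α] [Preorder β] {g : α → β}
    {M s : Set α} {x : α} (hg : StrictAntiOn g s) (hmin : IsMinOn g M x) (hx : x ∈ M ∩ s) :
    IsGreatest (M ∩ s) x :=
  ⟨hx, fun _ hy => (hg.le_iff_ge hx.2 hy.2).1 (hmin hy.1)⟩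

theorem isLeast_inter_of_isMinOn {α β : Type*} [LinearOrder α] [Preorder β] {g : α → β}
    {M s : Set α} {x : α} (hg : StrictMonoOn g s) (hmin : IsMinOn g M x) (hx : x ∈ M ∩ s) :
    IsLeast (M ∩ s) x :=
  isGreatest_inter_of_isMinOn hg.dual_left hmin hx

theorem exists_subset_pair_of_forall_isGreatest_or_isLeast {α : Type*} [PartialOrder α]
    {X U V : Set α} (hX : X.Nonempty) (h : ∀ x ∈ X, IsGreatest U x ∨ IsLeast V x) :
    ∃ a ∈ X, ∃ b ∈ X, (a ∈ U ∧ b ∈ V ∨ a = b) ∧ X ⊆ {a, b} := by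
  by_cases hU : ∃ a ∈ X, IsGreatest U a
  · obtain ⟨a, haX, ha⟩ := hU
    by_cases hV : ∃ b ∈ X, IsLeast V b
    · obtain ⟨b, hbX, hb⟩ := hV
      exact ⟨a, haX, b, hbX, .inl ⟨ha.1, hb.1⟩, fun x hx =>
        (h x hx).imp (·.unique ha) (·.unique hb)⟩
    · exact ⟨a, haX, a, haX, .inr rfl, fun x hx =>
        .inl <| ((h x hx).resolve_right fun hx' => hV ⟨x, hx, hx'⟩).unique ha⟩
  · have hleast : ∀ x ∈ X, IsLeast V x := fun x hx =>
      (h x hx).resolve_left fun hx' => hU ⟨x, hx, hx'⟩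
    obtain ⟨b, hb⟩ := hX
    exact ⟨b, hb, b, hb, .inr rfl, fun x hx => .inl <| (hleast x hx).unique (hleast b hb)⟩

variable {S : Multiset ℝ} {M : Set ℝ} {x : ℝ}

theorem mem_Icc_of_isMinOn_loss (hS : S ≠ 0) (hmin : IsMinOn (loss · S) M x)
    (hM : (M ∩ Icc (medLo S) (medHi S)).Nonempty) : x ∈ Icc (medLo S) (medHi S) := by
  obtain ⟨z, hzM, hz⟩ := hM
  exact ⟨not_lt.1 fun hx => (loss_lt_loss_of_lt_medLo hS hx hz).not_ge (hmin hzM),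
    not_lt.1 fun hx => (loss_lt_loss_of_medHi_lt hS hx hz).not_ge (hmin hzM)⟩

theorem isGreatest_or_isLeast_of_isMinOn_loss (hS : S ≠ 0) (hmin : IsMinOn (loss · S) M x)
    (hxM : x ∈ M) (hx : x ∉ Icc (medLo S) (medHi S)) :
    IsGreatest (M ∩ Iio (medLo S)) x ∨ IsLeast (M ∩ Ioi (medHi S)) x := by
  rcases lt_or_ge x (medLo S) with hlo | hlo
  · exact .inl <| isGreatest_inter_of_isMinOn
      ((strictAntiOn_loss_Iic_medLo hS).mono Iio_subset_Iic_self) hmin ⟨hxM, hlo⟩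
  · exact .inr <| isLeast_inter_of_isMinOn
      ((strictMonoOn_loss_Ici_medHi hS).mono Ioi_subset_Ici_self) hmin
      ⟨hxM, not_le.1 fun hhi => hx ⟨hlo, hhi⟩⟩

end Minimizers

/-- The menu of agent `i` at `D`: the outcomes she can induce by a nonempty report while the others
report `D_{-i}`. The entry `D i` is only a placeholder. -/
def menu {n : ℕ} (π : (Fin n → Multiset ℝ) → ℝ) (i : Fin n) (D : Fin n → Multiset ℝ) : Set ℝ :=
  (fun T => π (update D i T)) '' {T | T ≠ 0}

theorem Strategyproof.isMinOn_menu {n : ℕ} {π : (Fin n → Multiset ℝ) → ℝ}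
    (hsp : Strategyproof n π) {i : Fin n} {D : Fin n → Multiset ℝ} (hD : ∀ j, j ≠ i → D j ≠ 0)
    {S : Multiset ℝ} (hS : S ≠ 0) :
    IsMinOn (loss · S) (menu π i D) (π (update D i S)) := by
  rintro _ ⟨T, hT, rfl⟩
  have hprofile : ∀ j, update D i S j ≠ 0 :=
    (forall_update_iff D fun _ R => R ≠ 0).2 ⟨hS, hD⟩
  simpa using hsp i (update D i S) hprofile T hT

theorem stmt_3_general (n : ℕ) (π : (Fin n → Multiset ℝ) → ℝ) (hsp : Strategyproof n π)
    (i : Fin n) (D : Fin n → Multiset ℝ) (hD : ∀ j, j ≠ i → D j ≠ 0) (y0 y1 : ℝ) :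
    (∀ Di : Multiset ℝ, Di ≠ 0 → medLo Di = y0 → medHi Di = y1 →
        π (Function.update D i Di) ∈ Set.Icc y0 y1) ∨
    (∃ s h : ℝ, (s < y0 ∧ y1 < h ∨ s = h) ∧
      ∀ Di : Multiset ℝ, Di ≠ 0 → medLo Di = y0 → medHi Di = y1 →
        (loss s Di < loss h Di → π (Function.update D i Di) = s) ∧
        (loss h Di < loss s Di → π (Function.update D i Di) = h) ∧
        (loss s Di = loss h Di →
          π (Function.update D i Di) = s ∨ π (Function.update D i Di) = h)) := by
  have hmin {S : Multiset ℝ} (hS : S ≠ 0) := hsp.isMinOn_menu hD hS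
  set M := menu π i D
  by_cases hM : (M ∩ Icc y0 y1).Nonempty
  · left
    rintro S hS rfl rfl
    exact mem_Icc_of_isMinOn_loss hS (hmin hS) hM
  let X := (fun S => π (update D i S)) '' {S | S ≠ 0 ∧ medLo S = y0 ∧ medHi S = y1}
  have hXM : X ⊆ M := image_mono fun _ hS => hS.1
  rcases X.eq_empty_or_nonempty with hX | hX
  · exact .inl fun S hS hlo hhi => (hX.subset ⟨S, ⟨hS, hlo, hhi⟩, rfl⟩).elim
  right
  have hextreme : ∀ x ∈ X, IsGreatest (M ∩ Iio y0) x ∨ IsLeast (M ∩ Ioi y1) x := by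
    rintro _ ⟨S, ⟨hS, rfl, rfl⟩, rfl⟩
    have hSM : π (update D i S) ∈ M := mem_image_of_mem _ hS
    exact isGreatest_or_isLeast_of_isMinOn_loss hS (hmin hS) hSM fun hx => hM ⟨_, hSM, hx⟩
  obtain ⟨s, hs, h, hh, hsh, hpair⟩ :=
    exists_subset_pair_of_forall_isGreatest_or_isLeast hX hextreme
  refine ⟨s, h, hsh.imp_left (And.imp And.right And.right), fun S hS hlo hhi => ?_⟩
  have hsel : π (update D i S) = s ∨ π (update D i S) = h := hpair ⟨S, ⟨hS, hlo, hhi⟩, rfl⟩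
  exact ⟨fun hlt => hsel.resolve_right fun heq => hlt.not_ge (heq ▸ hmin hS (hXM hs)),
    fun hlt => hsel.resolve_left fun heq => hlt.not_ge (heq ▸ hmin hS (hXM hh)), fun _ => hsel⟩

/-- Lemma 2 of the paper: for an anonymous mechanism that is strategyproof
w.r.t. manipulation, replication and hiding, fixing the other agents' reports and the
median interval `[y0,y1]` of agent `i`'s report, either the output always lies in
`[y0,y1]`, or there are `s,h` with `s < y0 ≤ y1 < h` or `s = h` realizing Eqn. (4). -/
theorem stmt_3 (n : ℕ) (π : (Fin n → Multiset ℝ) → ℝ)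
    (hanon : Anonymous n π) (hsp : Strategyproof n π)
    (i : Fin n) (D : Fin n → Multiset ℝ) (hD : ∀ j, j ≠ i → D j ≠ 0)
    (y0 y1 : ℝ) (hy : y0 ≤ y1) :
    (∀ Di : Multiset ℝ, Di ≠ 0 → medLo Di = y0 → medHi Di = y1 →
        π (Function.update D i Di) ∈ Set.Icc y0 y1) ∨
    (∃ s h : ℝ, (s < y0 ∧ y1 < h ∨ s = h) ∧
      ∀ Di : Multiset ℝ, Di ≠ 0 → medLo Di = y0 → medHi Di = y1 →
        (loss s Di < loss h Di → π (Function.update D i Di) = s) ∧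
        (loss h Di < loss s Di → π (Function.update D i Di) = h) ∧
        (loss s Di = loss h Di →
          π (Function.update D i Di) = s ∨ π (Function.update D i Di) = h)) :=
  stmt_3_general n π hsp i D hD y0 y1
end

section
/- Let π be a mechanism for n agents that is anonymous, efficient, and strategyproof w.r.t. manipulation, replication, and hiding. Then there do NOT exist an agent i, a tuple D_{−i} of the other agents' reports, reals y0 ≤ y1, and s, h ∈ ℝ with s < y0 ≤ y1 < h, such that for every nonempty finite multiset D_i with med(D_i) = [y0,y1]: π(D_i,D_{−i}) = s if l(s,D_i) < l(h,D_i), π(D_i,D_{−i}) = h if l(s,D_i) > l(h,D_i), and π(D_i,D_{−i}) ∈ {s,h} otherwise. -/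
/-!
Fix everyone's report but agent `i`'s. Strategyproofness says that each report of `i` yields an
outcome of least loss for that report among her options, the outcomes she can bring about. The
two-output form forces `s` and `h` to be options with no option in between, and efficiency forbids
such a gap.

Let `y` lie inside the gap, let `R` peak at `y` and rank `h` above `s`, and let `L` peak at `y`
and rank `s` above `h`. When `i` reports `R` the outcome is `h`, so by efficiency some other agent
`k` strictly prefers `h` to `y`, and hence to `s` by convexity of losses. Then either `i` still has
the gap after `k` switches to `L`, or `k` has it after `i` switches to `R`. As neither `L` nor `R`
prefers `h` to `y`, each move leaves fewer agents, other than the owner of the gap, who do, so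
the process cannot continue forever.
-/

open Set Function

section Loss

theorem loss_add (x : ℝ) (S T : Multiset ℝ) : loss x (S + T) = loss x S + loss x T := by
  simp [loss]

theorem loss_cons (x y : ℝ) (S : Multiset ℝ) : loss x (y ::ₘ S) = |x - y| + loss x S := by
  simp [loss]

theorem loss_replicate (x y : ℝ) (k : ℕ) : loss x (Multiset.replicate k y) = k * |x - y| := by
  simp [loss]

theorem loss_le_loss_add_card_mul (x x' : ℝ) (S : Multiset ℝ) :
    loss x S ≤ loss x' S + S.card * |x - x'| := by
  induction S using Multiset.induction with
  | empty => simp [loss]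
  | cons t S ih =>
    rw [loss_cons, loss_cons, Multiset.card_cons, Nat.cast_succ]
    linarith [abs_sub_le x x' t]

theorem convexOn_loss (S : Multiset ℝ) : ConvexOn ℝ univ fun x => loss x S := by
  induction S using Multiset.induction with
  | empty => simpa [loss] using convexOn_const 0 convex_univ
  | cons t S ih =>
    simp only [loss_cons, ← Real.dist_eq]
    exact (convexOn_dist t convex_univ).add ih

theorem loss_lt_left_of_right_lt {S : Multiset ℝ} {a b z : ℝ} (hz : z ∈ openSegment ℝ a b)
    (hbz : loss b S < loss z S) : loss z S < loss a S :=
  (convexOn_loss S).lt_left_of_right_lt (mem_univ a) (mem_univ b) hz hbz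

theorem loss_lt_of_mem_openSegment {S : Multiset ℝ} {a b z : ℝ} (hz : z ∈ openSegment ℝ a b)
    (hba : loss b S < loss a S) : loss z S < loss a S := by
  by_contra! haz
  exact haz.not_gt (loss_lt_left_of_right_lt hz (hba.trans_le haz))

theorem loss_lt_left_of_mem_Ioc {S : Multiset ℝ} {a b z : ℝ} (hz : z ∈ Ioc a b)
    (hba : loss b S < loss a S) : loss z S < loss a S := by
  rcases hz.2.eq_or_lt with rfl | hzb
  · exact hba
  · exact loss_lt_of_mem_openSegment (Ioo_subset_openSegment ⟨hz.1, hzb⟩) hba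

theorem loss_lt_right_of_mem_Ico {S : Multiset ℝ} {a b z : ℝ} (hz : z ∈ Ico a b)
    (hab : loss a S < loss b S) : loss z S < loss b S := by
  rcases hz.1.eq_or_lt with rfl | haz
  · exact hab
  · exact loss_lt_of_mem_openSegment
      (openSegment_symm ℝ a b ▸ Ioo_subset_openSegment ⟨haz, hz.2⟩) hab

end Loss

section Peak

/-- The loss of `S` has `y` as its unique minimiser. Such reports generalise the one-point report
`{y}`: they fix the ideal outcome of an agent but not how she ranks outcomes on either side. -/
def IsPeak (S : Multiset ℝ) (y : ℝ) : Prop :=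
  ∀ x, x ≠ y → loss y S < loss x S

namespace IsPeak

variable {S : Multiset ℝ} {a w y : ℝ}

theorem ne_zero (hS : IsPeak S y) : S ≠ 0 := by
  rintro rfl
  simpa [loss] using hS (y + 1) (by simp)

theorem loss_le (hS : IsPeak S y) (x : ℝ) : loss y S ≤ loss x S := by
  rcases eq_or_ne x y with rfl | hxy
  · exact le_rfl
  · exact (hS x hxy).le

theorem eq_of_loss_le (hS : IsPeak S y) (hw : loss w S ≤ loss y S) : w = y := by
  by_contra hne
  exact (hS w hne).not_ge hw

theorem le_of_loss_le (hS : IsPeak S y) (hay : a ≤ y) (hw : loss w S ≤ loss a S) : a ≤ w := by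
  by_contra! hwa
  exact hw.not_gt (loss_lt_left_of_mem_Ioc ⟨hwa, hay⟩ (hS w (hwa.trans_le hay).ne))

theorem ge_of_loss_le (hS : IsPeak S y) (hya : y ≤ a) (hw : loss w S ≤ loss a S) : w ≤ a := by
  by_contra! haw
  exact hw.not_gt (loss_lt_right_of_mem_Ico ⟨hya, haw⟩ (hS w (hya.trans_lt haw).ne'))

end IsPeak

theorem isPeak_replicate_add {S : Multiset ℝ} {m : ℕ} (hm : S.card < m) (y : ℝ) :
    IsPeak (Multiset.replicate m y + S) y := by
  intro x hxy
  have hlip := loss_le_loss_add_card_mul y x S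
  have hmaj : S.card * |y - x| < m * |y - x| := by
    have : 0 < |y - x| := abs_sub_pos.2 hxy.symm
    gcongr
  rw [loss_add, loss_add, loss_replicate, loss_replicate, sub_self, abs_zero, mul_zero,
    abs_sub_comm x y]
  linarith

theorem exists_isPeak_loss_lt {a b y : ℝ} (hy : Wbtw ℝ a y b) (hyb : y ≠ b) :
    ∃ Y, IsPeak Y y ∧ loss a Y < loss b Y := by
  have hpos : 0 < |b - y| := abs_sub_pos.2 hyb.symm
  have hab : |b - a| = |a - y| + |b - y| := by
    simpa only [Real.dist_eq, abs_sub_comm _ a, abs_sub_comm y b] using hy.dist_add_dist.symm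
  obtain ⟨k, hk⟩ := exists_lt_nsmul hpos |a - y|
  rw [nsmul_eq_mul] at hk
  refine ⟨Multiset.replicate (k + 1) y + Multiset.replicate k a,
    isPeak_replicate_add (by simp) y, ?_⟩
  simp only [loss_add, loss_replicate, sub_self, abs_zero, mul_zero, add_zero, hab]
  push_cast
  nlinarith [mul_nonneg k.cast_nonneg (abs_nonneg (a - y))]

/-- `Y` peaks at the interior point `y` of the interval `(s, h)` and ranks `s` above `h`. -/
structure IsLeftPeak (Y : Multiset ℝ) (s y h : ℝ) : Prop where
  mem_Ioo : y ∈ Ioo s h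
  isPeak : IsPeak Y y
  loss_lt : loss s Y < loss h Y

/-- `Y` peaks at the interior point `y` of the interval `(s, h)` and ranks `h` above `s`. -/
structure IsRightPeak (Y : Multiset ℝ) (s y h : ℝ) : Prop where
  mem_Ioo : y ∈ Ioo s h
  isPeak : IsPeak Y y
  loss_lt : loss h Y < loss s Y

theorem exists_isLeftPeak {s y h : ℝ} (hy : y ∈ Ioo s h) : ∃ Y, IsLeftPeak Y s y h := by
  obtain ⟨Y, hY, hlt⟩ := exists_isPeak_loss_lt (Sbtw.of_lt_of_lt hy.1 hy.2).wbtw hy.2.ne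
  exact ⟨Y, hy, hY, hlt⟩

theorem exists_isRightPeak {s y h : ℝ} (hy : y ∈ Ioo s h) : ∃ Y, IsRightPeak Y s y h := by
  obtain ⟨Y, hY, hlt⟩ := exists_isPeak_loss_lt (Sbtw.of_lt_of_lt hy.1 hy.2).wbtw.symm hy.1.ne'
  exact ⟨Y, hy, hY, hlt⟩

end Peak

section Median

theorem sort_add_of_forall_le {α : Type*} [LinearOrder α] {S T : Multiset α}
    (hST : ∀ a ∈ S, ∀ b ∈ T, a ≤ b) :
    (S + T).sort (· ≤ ·) = S.sort (· ≤ ·) ++ T.sort (· ≤ ·) := by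
  refine List.Perm.eq_of_pairwise (le := (· ≤ ·)) (fun _ _ _ _ => le_antisymm)
    (Multiset.pairwise_sort _ _) ?_ ?_
  · simpa [List.pairwise_append, Multiset.pairwise_sort] using hST
  · rw [← Multiset.coe_eq_coe, ← Multiset.coe_add]
    simp only [Multiset.sort_eq]

variable {L R : Multiset ℝ} {y₀ y₁ : ℝ}

theorem sort_add_cons_cons (hL : ∀ a ∈ L, a ≤ y₀) (hy : y₀ ≤ y₁) (hR : ∀ b ∈ R, y₁ ≤ b) :
    (L + y₀ ::ₘ y₁ ::ₘ R).sort (· ≤ ·) = L.sort (· ≤ ·) ++ y₀ :: y₁ :: R.sort (· ≤ ·) := by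
  have hy₀ : ∀ b ∈ y₁ ::ₘ R, y₀ ≤ b := by
    simpa [hy] using fun b hb => hy.trans (hR b hb)
  have hL' : ∀ a ∈ L, ∀ b ∈ y₀ ::ₘ y₁ ::ₘ R, a ≤ b := fun a ha b hb =>
    (hL a ha).trans <| (Multiset.mem_cons.1 hb).elim (fun h => h.ge) (hy₀ b)
  rw [sort_add_of_forall_le hL', Multiset.sort_cons _ _ _ hy₀, Multiset.sort_cons _ _ _ hR]

theorem medLo_add_cons_cons (hcard : L.card = R.card) (hL : ∀ a ∈ L, a ≤ y₀) (hy : y₀ ≤ y₁)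
    (hR : ∀ b ∈ R, y₁ ≤ b) : medLo (L + y₀ ::ₘ y₁ ::ₘ R) = y₀ := by
  have hmid : ((L + y₀ ::ₘ y₁ ::ₘ R).card - 1) / 2 = (L.sort (· ≤ ·)).length := by
    simp only [Multiset.card_add, Multiset.card_cons, Multiset.length_sort]
    omega
  rw [medLo, hmid, sort_add_cons_cons hL hy hR]
  simp

theorem medHi_add_cons_cons (hcard : L.card = R.card) (hL : ∀ a ∈ L, a ≤ y₀) (hy : y₀ ≤ y₁)
    (hR : ∀ b ∈ R, y₁ ≤ b) : medHi (L + y₀ ::ₘ y₁ ::ₘ R) = y₁ := by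
  have hmid : (L + y₀ ::ₘ y₁ ::ₘ R).card / 2 = (L.sort (· ≤ ·)).length + 1 := by
    simp only [Multiset.card_add, Multiset.card_cons, Multiset.length_sort]
    omega
  rw [medHi, hmid, sort_add_cons_cons hL hy hR]
  simp

/-- `y₀` and `y₁` flanked by `k` copies of `p` and `k` copies of `q`. When `p ≤ y₀ ≤ y₁ ≤ q` the
tails cancel in the median interval `[y₀, y₁]` but not in comparisons of losses outside it. -/
def tailedPair (k : ℕ) (p y₀ y₁ q : ℝ) : Multiset ℝ :=
  Multiset.replicate k p + y₀ ::ₘ y₁ ::ₘ Multiset.replicate k q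

section TailedPair

variable (k : ℕ) {p q s h : ℝ}

theorem tailedPair_ne_zero : tailedPair k p y₀ y₁ q ≠ 0 := by
  simp [tailedPair]

theorem medLo_tailedPair (hp : p ≤ y₀) (hy : y₀ ≤ y₁) (hq : y₁ ≤ q) :
    medLo (tailedPair k p y₀ y₁ q) = y₀ :=
  medLo_add_cons_cons (by simp) (fun _ ha => (Multiset.eq_of_mem_replicate ha).trans_le hp) hy
    fun _ hb => hq.trans_eq (Multiset.eq_of_mem_replicate hb).symm

theorem medHi_tailedPair (hp : p ≤ y₀) (hy : y₀ ≤ y₁) (hq : y₁ ≤ q) :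
    medHi (tailedPair k p y₀ y₁ q) = y₁ :=
  medHi_add_cons_cons (by simp) (fun _ ha => (Multiset.eq_of_mem_replicate ha).trans_le hp) hy
    fun _ hb => hq.trans_eq (Multiset.eq_of_mem_replicate hb).symm

theorem loss_tailedPair (x : ℝ) :
    loss x (tailedPair k p y₀ y₁ q) = k * |x - p| + |x - y₀| + |x - y₁| + k * |x - q| := by
  rw [tailedPair, loss_add, loss_cons, loss_cons, loss_replicate, loss_replicate]
  ring

end TailedPair

theorem exists_median_loss_left_lt {s h : ℝ} (hs : s < y₀) (hy : y₀ ≤ y₁) (hh : y₁ < h) :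
    ∃ A : Multiset ℝ, A ≠ 0 ∧ medLo A = y₀ ∧ medHi A = y₁ ∧
      loss y₁ A < loss s A ∧ loss s A < loss h A := by
  obtain ⟨k, hk⟩ := exists_lt_nsmul (sub_pos.2 hh) (y₀ - s)
  rw [nsmul_eq_mul] at hk
  refine ⟨tailedPair k s y₀ y₁ y₁, tailedPair_ne_zero k, medLo_tailedPair k hs.le hy le_rfl,
    medHi_tailedPair k hs.le hy le_rfl, ?_, ?_⟩
  · rw [loss_tailedPair, loss_tailedPair, abs_sub_comm s y₁, sub_self, sub_self, abs_zero,
      abs_of_nonneg (sub_nonneg.2 hy), abs_of_neg (sub_neg.2 hs),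
      abs_of_pos (sub_pos.2 (hs.trans_le hy))]
    linarith
  · rw [loss_tailedPair, loss_tailedPair, sub_self, abs_zero, abs_of_neg (sub_neg.2 hs),
      abs_of_neg (by linarith : s - y₁ < 0), abs_of_pos (by linarith : 0 < h - s),
      abs_of_pos (by linarith : 0 < h - y₀), abs_of_pos (sub_pos.2 hh)]
    linarith

theorem exists_median_loss_right_lt {s h : ℝ} (hs : s < y₀) (hy : y₀ ≤ y₁) (hh : y₁ < h) :
    ∃ B : Multiset ℝ, B ≠ 0 ∧ medLo B = y₀ ∧ medHi B = y₁ ∧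
      loss y₀ B < loss h B ∧ loss h B < loss s B := by
  obtain ⟨k, hk⟩ := exists_lt_nsmul (sub_pos.2 hs) (h - y₁)
  rw [nsmul_eq_mul] at hk
  refine ⟨tailedPair k y₀ y₀ y₁ h, tailedPair_ne_zero k, medLo_tailedPair k le_rfl hy hh.le,
    medHi_tailedPair k le_rfl hy hh.le, ?_, ?_⟩
  · rw [loss_tailedPair, loss_tailedPair, abs_sub_comm y₀ h, sub_self, sub_self, abs_zero,
      abs_of_nonpos (sub_nonpos.2 hy), abs_of_pos (sub_pos.2 hh),
      abs_of_pos (sub_pos.2 (hy.trans_lt hh))]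
    linarith
  · rw [loss_tailedPair, loss_tailedPair, sub_self, abs_zero, abs_of_neg (sub_neg.2 hs),
      abs_of_neg (by linarith : s - y₁ < 0), abs_of_neg (by linarith : s - h < 0),
      abs_of_pos (by linarith : 0 < h - y₀), abs_of_pos (sub_pos.2 hh)]
    linarith

end Median

section Options

variable {n : ℕ} {π : (Fin n → Multiset ℝ) → ℝ} {D : Fin n → Multiset ℝ} {i : Fin n}
  {A Y : Multiset ℝ} {x y : ℝ}

/-- The outcomes that agent `i` can bring about by varying her own report in the profile `D`. -/
def options (π : (Fin n → Multiset ℝ) → ℝ) (i : Fin n) (D : Fin n → Multiset ℝ) : Set ℝ :=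
  {x | ∃ A : Multiset ℝ, A ≠ 0 ∧ π (update D i A) = x}

theorem update_mem_options (hA : A ≠ 0) : π (update D i A) ∈ options π i D :=
  ⟨A, hA, rfl⟩

theorem self_mem_options (hDi : D i ≠ 0) : π D ∈ options π i D :=
  ⟨D i, hDi, by rw [update_eq_self]⟩

theorem options_update_self : options π i (update D i A) = options π i D := by
  simp only [options, update_idem]

theorem update_ne_zero (hD : ∀ j, D j ≠ 0) (i : Fin n) (hA : A ≠ 0) (j : Fin n) :
    update D i A j ≠ 0 :=
  (forall_update_iff D fun _ B => B ≠ 0).2 ⟨hA, fun j _ => hD j⟩ j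

theorem Strategyproof.loss_le (hsp : Strategyproof n π) (hD : ∀ j, D j ≠ 0)
    (hx : x ∈ options π i D) : loss (π D) (D i) ≤ loss x (D i) := by
  obtain ⟨A, hA, rfl⟩ := hx
  exact hsp i D hD A hA

theorem Strategyproof.loss_update_le (hsp : Strategyproof n π) (hD : ∀ j, D j ≠ 0) (hA : A ≠ 0)
    (hx : x ∈ options π i D) : loss (π (update D i A)) A ≤ loss x A := by
  have := hsp.loss_le (update_ne_zero hD i hA) (options_update_self (A := A) ▸ hx)
  rwa [update_self] at this

theorem Strategyproof.outcome_eq_of_isPeak (hsp : Strategyproof n π) (hD : ∀ j, D j ≠ 0)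
    (hY : IsPeak Y y) (hy : y ∈ options π i D) : π (update D i Y) = y :=
  hY.eq_of_loss_le (hsp.loss_update_le hD hY.ne_zero hy)

theorem Efficient.exists_loss_lt (heff : Efficient n π) (hD : ∀ j, D j ≠ 0)
    (hi : loss x (D i) < loss (π D) (D i)) : ∃ k, loss (π D) (D k) < loss x (D k) := by
  by_contra! hx
  exact heff D hD ⟨x, hx, i, hi⟩

end Options

section Gap

/-- `s < h` are consecutive elements of `O`. -/
structure IsGap (O : Set ℝ) (s h : ℝ) : Prop where
  lt : s < h
  left_mem : s ∈ O
  right_mem : h ∈ O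
  notMem_Ioo : ∀ x ∈ O, x ∉ Ioo s h

variable {n : ℕ} {π : (Fin n → Multiset ℝ) → ℝ} {D : Fin n → Multiset ℝ} {i k : Fin n}
  {L R Y : Multiset ℝ} {s h v y : ℝ}

namespace IsGap

theorem outcome_eq_or_eq (hgap : IsGap (options π i D) s h) (hsp : Strategyproof n π)
    (hD : ∀ j, D j ≠ 0) (hy : y ∈ Ioo s h) (hY : IsPeak Y y) :
    π (update D i Y) = s ∨ π (update D i Y) = h := by
  have hs := hY.le_of_loss_le hy.1.le (hsp.loss_update_le hD hY.ne_zero hgap.left_mem)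
  have hh := hY.ge_of_loss_le hy.2.le (hsp.loss_update_le hD hY.ne_zero hgap.right_mem)
  exact (eq_endpoints_or_mem_Ioo_of_mem_Icc ⟨hs, hh⟩).imp_right fun hor =>
    hor.resolve_right (hgap.notMem_Ioo _ (update_mem_options hY.ne_zero))

theorem outcome_eq_left (hgap : IsGap (options π i D) s h) (hsp : Strategyproof n π)
    (hD : ∀ j, D j ≠ 0) (hY : IsLeftPeak Y s y h) : π (update D i Y) = s := by
  refine (hgap.outcome_eq_or_eq hsp hD hY.mem_Ioo hY.isPeak).resolve_right fun heq => ?_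
  exact hY.loss_lt.not_ge (heq ▸ hsp.loss_update_le hD hY.isPeak.ne_zero hgap.left_mem)

theorem outcome_eq_right (hgap : IsGap (options π i D) s h) (hsp : Strategyproof n π)
    (hD : ∀ j, D j ≠ 0) (hY : IsRightPeak Y s y h) : π (update D i Y) = h := by
  refine (hgap.outcome_eq_or_eq hsp hD hY.mem_Ioo hY.isPeak).resolve_left fun heq => ?_
  exact hY.loss_lt.not_ge (heq ▸ hsp.loss_update_le hD hY.isPeak.ne_zero hgap.right_mem)

end IsGap

theorem Strategyproof.outcome_update_eq_left (hsp : Strategyproof n π) (hD : ∀ j, D j ≠ 0)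
    (hL : IsLeftPeak L s y h) (hk : loss h (D k) < loss s (D k)) (hs : π D = s) :
    π (update D k L) = s := by
  have hLs : loss (π (update D k L)) L ≤ loss s L :=
    hsp.loss_update_le hD hL.isPeak.ne_zero (hs ▸ self_mem_options (hD k))
  have hks : loss s (D k) ≤ loss (π (update D k L)) (D k) :=
    hs ▸ hsp.loss_le hD (update_mem_options hL.isPeak.ne_zero)
  have hsw := hL.isPeak.le_of_loss_le hL.mem_Ioo.1.le hLs
  have hwh := hL.isPeak.ge_of_loss_le hL.mem_Ioo.2.le (hLs.trans hL.loss_lt.le)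
  by_contra hne
  exact hks.not_gt (loss_lt_left_of_mem_Ioc ⟨hsw.lt_of_ne' hne, hwh⟩ hk)

namespace IsGap

theorem outcome_update_eq_left (hgap : IsGap (options π i D) s h) (hsp : Strategyproof n π)
    (hD : ∀ j, D j ≠ 0) (hki : k ≠ i) (hk : loss h (D k) < loss s (D k))
    (hL : IsLeftPeak L s y h) (hY : IsLeftPeak Y s v h) :
    π (update (update D k L) i Y) = s := by
  rw [update_comm hki]
  exact hsp.outcome_update_eq_left (update_ne_zero hD i hY.isPeak.ne_zero) hL
    (by rwa [update_of_ne hki]) (hgap.outcome_eq_left hsp hD hY)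

theorem left_mem_options_update (hgap : IsGap (options π i D) s h) (hsp : Strategyproof n π)
    (hD : ∀ j, D j ≠ 0) (hki : k ≠ i) (hk : loss h (D k) < loss s (D k))
    (hL : IsLeftPeak L s y h) : s ∈ options π i (update D k L) :=
  ⟨L, hL.isPeak.ne_zero, hgap.outcome_update_eq_left hsp hD hki hk hL hL⟩

theorem notMem_Ioo_of_mem_options_update (hgap : IsGap (options π i D) s h)
    (hsp : Strategyproof n π) (hD : ∀ j, D j ≠ 0) (hki : k ≠ i)
    (hk : loss h (D k) < loss s (D k)) (hL : IsLeftPeak L s y h)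
    (hv : v ∈ options π i (update D k L)) : v ∉ Ioo s h := by
  intro hvI
  obtain ⟨Y, hY⟩ := exists_isLeftPeak hvI
  have hYs := hgap.outcome_update_eq_left hsp hD hki hk hL hY
  have hYv := hsp.outcome_eq_of_isPeak (update_ne_zero hD k hL.isPeak.ne_zero) hY.isPeak hv
  exact hvI.1.ne (hYs.symm.trans hYv)

theorem outcome_update_update_eq_or_eq (hgap : IsGap (options π i D) s h)
    (hsp : Strategyproof n π) (hD : ∀ j, D j ≠ 0) (hki : k ≠ i)
    (hk : loss h (D k) < loss s (D k)) (hL : IsLeftPeak L s y h) (hR : IsRightPeak R s y h) :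
    π (update (update D k L) i R) = s ∨ π (update (update D k L) i R) = h := by
  have hE := update_ne_zero hD i hR.isPeak.ne_zero
  have hD' := update_ne_zero hD k hL.isPeak.ne_zero
  have hRs := hsp.loss_update_le hD' hR.isPeak.ne_zero
    (hgap.left_mem_options_update hsp hD hki hk hL)
  have hmem : h ∈ options π k (update D i R) :=
    hgap.outcome_eq_right hsp hD hR ▸ self_mem_options (hE k)
  have hLh := hsp.loss_update_le hE hL.isPeak.ne_zero hmem
  rw [update_comm hki.symm] at hLh
  have hsw := hR.isPeak.le_of_loss_le hR.mem_Ioo.1.le hRs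
  have hwh := hL.isPeak.ge_of_loss_le hL.mem_Ioo.2.le hLh
  exact (eq_endpoints_or_mem_Ioo_of_mem_Icc ⟨hsw, hwh⟩).imp_right fun hor =>
    hor.resolve_right <| hgap.notMem_Ioo_of_mem_options_update hsp hD hki hk hL <|
      update_mem_options hR.isPeak.ne_zero

theorem isGap_options_update (hgap : IsGap (options π i D) s h) (hsp : Strategyproof n π)
    (hD : ∀ j, D j ≠ 0) (hki : k ≠ i) (hk : loss h (D k) < loss s (D k))
    (hL : IsLeftPeak L s y h) (hmem : h ∈ options π i (update D k L)) :
    IsGap (options π i (update D k L)) s h where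
  lt := hgap.lt
  left_mem := hgap.left_mem_options_update hsp hD hki hk hL
  right_mem := hmem
  notMem_Ioo _ := hgap.notMem_Ioo_of_mem_options_update hsp hD hki hk hL

theorem isGap_options_other (hgap : IsGap (options π i D) s h) (hsp : Strategyproof n π)
    (hD : ∀ j, D j ≠ 0) (hki : k ≠ i) (hk : loss h (D k) < loss s (D k))
    (hR : IsRightPeak R s y h) (hmem : s ∈ options π k (update D i R)) :
    IsGap (options π k (update D i R)) s h where
  lt := hgap.lt
  left_mem := hmem
  right_mem := hgap.outcome_eq_right hsp hD hR ▸
    self_mem_options (update_ne_zero hD i hR.isPeak.ne_zero k)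
  notMem_Ioo v hv hvI := by
    obtain ⟨Z, hZ, hZv⟩ := hv
    obtain ⟨Y, hY⟩ := exists_isLeftPeak hvI
    have hvi : v ∈ options π i (update D k Z) :=
      ⟨R, hR.isPeak.ne_zero, by rw [update_comm hki, hZv]⟩
    have hYZ := hsp.outcome_eq_of_isPeak (update_ne_zero hD k hZ) hY.isPeak hvi
    have hvk : v ∈ options π k (update D i Y) := ⟨Z, hZ, by rw [update_comm hki.symm, hYZ]⟩
    have hsv := hsp.loss_le (update_ne_zero hD i hY.isPeak.ne_zero) hvk
    rw [hgap.outcome_eq_left hsp hD hY, update_of_ne hki] at hsv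
    exact hsv.not_gt (loss_lt_left_of_mem_Ioc (Ioo_subset_Ioc_self hvI) hk)

theorem isGap_options_update_or (hgap : IsGap (options π i D) s h)
    (hsp : Strategyproof n π) (hD : ∀ j, D j ≠ 0) (hki : k ≠ i)
    (hk : loss h (D k) < loss s (D k)) (hL : IsLeftPeak L s y h) (hR : IsRightPeak R s y h) :
    IsGap (options π i (update D k L)) s h ∨ IsGap (options π k (update D i R)) s h := by
  rcases hgap.outcome_update_update_eq_or_eq hsp hD hki hk hL hR with hs | hh
  · exact .inr <| hgap.isGap_options_other hsp hD hki hk hR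
      ⟨L, hL.isPeak.ne_zero, by rw [update_comm hki.symm, hs]⟩
  · exact .inl <| hgap.isGap_options_update hsp hD hki hk hL ⟨R, hR.isPeak.ne_zero, hh⟩

theorem exists_loss_right_lt (hgap : IsGap (options π i D) s h) (heff : Efficient n π)
    (hsp : Strategyproof n π) (hD : ∀ j, D j ≠ 0) (hR : IsRightPeak R s y h) :
    ∃ k ≠ i, loss h (D k) < loss y (D k) := by
  have hyh := hR.isPeak h hR.mem_Ioo.2.ne'
  have hout := hgap.outcome_eq_right hsp hD hR
  obtain ⟨k, hk⟩ := heff.exists_loss_lt (x := y) (i := i)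
    (update_ne_zero hD i hR.isPeak.ne_zero) (by rwa [hout, update_self])
  rw [hout] at hk
  have hki : k ≠ i := by
    rintro rfl
    rw [update_self] at hk
    exact hk.not_gt hyh
  exact ⟨k, hki, by rwa [update_of_ne hki] at hk⟩

end IsGap

-- `T` contains every agent but `i` who strictly prefers `h` to `y`; each move removes `k` from it.
theorem not_isGap_options_of_forall_notMem (heff : Efficient n π) (hsp : Strategyproof n π)
    (hD : ∀ j, D j ≠ 0) (hy : y ∈ Ioo s h) (T : Finset (Fin n))
    (hT : ∀ j ∉ T, j ≠ i → loss y (D j) ≤ loss h (D j)) : ¬IsGap (options π i D) s h := by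
  obtain ⟨L, hL⟩ := exists_isLeftPeak hy
  obtain ⟨R, hR⟩ := exists_isRightPeak hy
  induction T using Finset.strongInduction generalizing i D with
  | H T ih =>
    intro hgap
    obtain ⟨k, hki, hk⟩ := hgap.exists_loss_right_lt heff hsp hD hR
    have hkT : k ∈ T := by
      by_contra hkT
      exact hk.not_ge (hT k hkT hki)
    have hks : loss h (D k) < loss s (D k) :=
      hk.trans (loss_lt_left_of_right_lt (Ioo_subset_openSegment hy) hk)
    have hT_erase : ∀ j ∉ T.erase k, j ≠ k → j ∉ T := fun j hj hjk hjT =>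
      hj (Finset.mem_erase.2 ⟨hjk, hjT⟩)
    rcases hgap.isGap_options_update_or hsp hD hki hks hL hR with hgap_i | hgap_k
    · refine ih (T.erase k) (Finset.erase_ssubset hkT) (update_ne_zero hD k hL.isPeak.ne_zero)
        (fun j hj hji => ?_) hgap_i
      rcases eq_or_ne j k with rfl | hjk
      · simpa using hL.isPeak.loss_le h
      · simpa [hjk] using hT j (hT_erase j hj hjk) hji
    · refine ih (T.erase k) (Finset.erase_ssubset hkT) (update_ne_zero hD i hR.isPeak.ne_zero)
        (fun j hj hjk => ?_) hgap_k
      rcases eq_or_ne j i with rfl | hji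
      · simpa using hR.isPeak.loss_le h
      · simpa [hji] using hT j (hT_erase j hj hjk) hji

theorem not_isGap_options (heff : Efficient n π) (hsp : Strategyproof n π)
    (hD : ∀ j, D j ≠ 0) : ¬IsGap (options π i D) s h := by
  intro hgap
  obtain ⟨y, hy⟩ := exists_between hgap.lt
  exact not_isGap_options_of_forall_notMem heff hsp hD hy Finset.univ (by simp) hgap

end Gap

section TwoOutput

variable {n : ℕ} {π : (Fin n → Multiset ℝ) → ℝ} {i : Fin n} {D : Fin n → Multiset ℝ}
  {y₀ y₁ s h : ℝ}

theorem isGap_options_of_forall_median (hsp : Strategyproof n π) (hD : ∀ j, D j ≠ 0)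
    (hs : s < y₀) (hy : y₀ ≤ y₁) (hh : y₁ < h)
    (hleft : ∀ A : Multiset ℝ, A ≠ 0 → medLo A = y₀ → medHi A = y₁ → loss s A < loss h A →
      π (update D i A) = s)
    (hright : ∀ B : Multiset ℝ, B ≠ 0 → medLo B = y₀ → medHi B = y₁ → loss h B < loss s B →
      π (update D i B) = h) :
    IsGap (options π i D) s h := by
  obtain ⟨A, hA, hAlo, hAhi, hAs, hAlt⟩ := exists_median_loss_left_lt hs hy hh
  obtain ⟨B, hB, hBlo, hBhi, hBh, hBlt⟩ := exists_median_loss_right_lt hs hy hh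
  have hAout := hleft A hA hAlo hAhi hAlt
  have hBout := hright B hB hBlo hBhi hBlt
  refine ⟨(hs.trans_le hy).trans hh, ⟨A, hA, hAout⟩, ⟨B, hB, hBout⟩, fun z hz hzI => ?_⟩
  rcases le_total z y₁ with hzy | hyz
  · have hAz := hsp.loss_update_le hD hA hz
    rw [hAout] at hAz
    exact hAz.not_gt (loss_lt_left_of_mem_Ioc ⟨hzI.1, hzy⟩ hAs)
  · have hBz := hsp.loss_update_le hD hB hz
    rw [hBout] at hBz
    exact hBz.not_gt (loss_lt_right_of_mem_Ico ⟨hy.trans hyz, hzI.2⟩ hBh)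

theorem stmt_5_general (heff : Efficient n π) (hsp : Strategyproof n π)
    (hD : ∀ j, j ≠ i → D j ≠ 0) (hs : s < y₀) (hy : y₀ ≤ y₁) (hh : y₁ < h)
    (hleft : ∀ A : Multiset ℝ, A ≠ 0 → medLo A = y₀ → medHi A = y₁ → loss s A < loss h A →
      π (update D i A) = s)
    (hright : ∀ B : Multiset ℝ, B ≠ 0 → medLo B = y₀ → medHi B = y₁ → loss h B < loss s B →
      π (update D i B) = h) :
    False := by
  have hD₀ : ∀ j, update D i {0} j ≠ 0 :=
    (forall_update_iff D fun _ B => B ≠ 0).2 ⟨Multiset.singleton_ne_zero 0, hD⟩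
  refine not_isGap_options (i := i) heff hsp hD₀
    (isGap_options_of_forall_median hsp hD₀ hs hy hh ?_ ?_) <;> simpa only [update_idem]

end TwoOutput

/-- Lemma 3 of the paper: an anonymous, efficient mechanism that is
strategyproof w.r.t. manipulation, replication and hiding never has the genuine
two-output form of Eqn. (4) with `s < y0 ≤ y1 < h`. -/
theorem stmt_5 (n : ℕ) (π : (Fin n → Multiset ℝ) → ℝ)
    (hanon : Anonymous n π) (heff : Efficient n π) (hsp : Strategyproof n π) :
    ¬ ∃ (i : Fin n) (D : Fin n → Multiset ℝ) (y0 y1 s h : ℝ),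
      (∀ j, j ≠ i → D j ≠ 0) ∧ y0 ≤ y1 ∧ s < y0 ∧ y1 < h ∧
      ∀ Di : Multiset ℝ, Di ≠ 0 → medLo Di = y0 → medHi Di = y1 →
        (loss s Di < loss h Di → π (Function.update D i Di) = s) ∧
        (loss h Di < loss s Di → π (Function.update D i Di) = h) ∧
        (loss s Di = loss h Di →
          π (Function.update D i Di) = s ∨ π (Function.update D i Di) = h) := by
  rintro ⟨i, D, y0, y1, s, h, hD, hy, hs, hh, hform⟩
  exact stmt_5_general heff hsp hD hs hy hh (fun A hA hlo hhi => (hform A hA hlo hhi).1)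
    fun B hB hlo hhi => (hform B hB hlo hhi).2.1
end

section
/- Fix n ≥ 1, extended reals α_1,…,α_{n−1} ∈ ℝ ∪ {−∞,+∞}, and β ∈ [0,1], and define the mechanism π on profiles D = (D_1,…,D_n) of nonempty finite multisets of reals by π(D) = med(y_1*,…,y_n*,α_1,…,α_{n−1}), the n-th smallest of these 2n−1 extended-real values (always a real number), where y_i* = β·y_i^0 + (1−β)·y_i^1 and [y_i^0, y_i^1] = med(D_i). Then π is group strategyproof w.r.t. manipulation, replication, and hiding: there is no nonempty coalition S of agents, profile D, and family of nonempty finite multisets (D_j′)_{j∈S} such that l(π(D_S′, D_{−S}), D_j) < l(π(D), D_j) for every j ∈ S. -/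
/-- The `k`-th smallest element of a multiset of extended reals. -/
noncomputable def nthSmallest (M : Multiset EReal) (k : ℕ) : EReal :=
  (M.sort (· ≤ ·)).getD (k - 1) 0

/-- The generalized-median value `med(y_1*, …, y_n*, α_1, …, α_{n-1})`: the `n`-th
smallest of these `2n-1` extended reals, where `y_i* = β·y_i^0 + (1-β)·y_i^1`
and `[y_i^0, y_i^1] = med(D_i)`. -/
noncomputable def medMech (n : ℕ) (α : Fin (n - 1) → EReal) (β : ℝ)
    (D : Fin n → Multiset ℝ) : EReal :=
  nthSmallest
    ((Finset.univ.val.map fun i : Fin n =>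
        ((β * medLo (D i) + (1 - β) * medHi (D i) : ℝ) : EReal)) +
      Finset.univ.val.map α) n

/-- Group strategyproofness w.r.t. manipulation, replication and hiding: no nonempty
coalition can deviate (each member replacing her report by an arbitrary nonempty finite
multiset) so that every member strictly decreases her loss. -/
def GroupStrategyproof (n : ℕ) (π : (Fin n → Multiset ℝ) → ℝ) : Prop :=
  ¬ ∃ (S : Finset (Fin n)) (D D' : Fin n → Multiset ℝ),
      S.Nonempty ∧ (∀ j, D j ≠ 0) ∧ (∀ j ∈ S, D' j ≠ 0) ∧
      ∀ j ∈ S, loss (π fun k => if k ∈ S then D' k else D k) (D j) < loss (π D) (D j)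

/-!
Membership of an order statistic in a lower set only depends on how many entries lie in that set.
Hence a coalition can move the outcome up only if one of its members originally votes weakly below
the outcome, and down only if one of them votes weakly above it. As votes are taken from median
intervals, such a member has at least half of her data on the side that the outcome moves away from,
so her loss does not decrease.
-/

section OrderStatistics

lemma getElem_mem_iff_lt_countP_of_pairwise_le {T : Type*} [Preorder T] {s : Set T}
    [DecidablePred (· ∈ s)] (hs : IsLowerSet s) {l : List T} (hl : l.Pairwise (· ≤ ·)) {k : ℕ}
    (hk : k < l.length) :
    l[k] ∈ s ↔ k < l.countP (· ∈ s) := by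
  induction l generalizing k with
  | nil => simp at hk
  | cons a t ih =>
    rw [List.pairwise_cons] at hl
    by_cases ha : a ∈ s
    · cases k with
      | zero => simp [ha]
      | succ k => simpa [ha] using ih hl.2 (by simpa using hk)
    · have notMem_tail : ∀ b ∈ t, b ∉ s := fun b hb hbs => ha (hs (hl.1 b hb) hbs)
      have countP_eq_zero : (a :: t).countP (· ∈ s) = 0 := by simpa [ha] using notMem_tail
      have getElem_notMem : (a :: t)[k] ∉ s := by
        rcases List.mem_cons.1 (List.getElem_mem hk) with h | h
        · rwa [h]
        · exact notMem_tail _ h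
      simp [countP_eq_zero, getElem_notMem]

lemma sort_getD_mem_iff_lt_countP {T : Type*} [LinearOrder T] {s : Set T} [DecidablePred (· ∈ s)]
    (hs : IsLowerSet s) {M : Multiset T} {k : ℕ} (hk : k < M.card) (d : T) :
    (M.sort (· ≤ ·)).getD k d ∈ s ↔ k < M.countP (· ∈ s) := by
  have hk' : k < (M.sort (· ≤ ·)).length := by rwa [Multiset.length_sort]
  rw [List.getD_eq_getElem _ _ hk',
    getElem_mem_iff_lt_countP_of_pairwise_le hs (Multiset.pairwise_sort M (· ≤ ·)) hk',
    ← Multiset.coe_countP, Multiset.sort_eq]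

end OrderStatistics

section Median

variable {S : Multiset ℝ} {p : ℝ} {s : Set ℝ} [DecidablePred (· ∈ s)]

lemma medLo_mem_iff (hs : IsLowerSet s) (hS : S ≠ 0) :
    medLo S ∈ s ↔ S.card ≤ 2 * S.countP (· ∈ s) := by
  have hcard : 0 < S.card := Multiset.card_pos.2 hS
  rw [medLo, sort_getD_mem_iff_lt_countP hs (by omega)]
  omega

lemma medHi_mem_iff (hs : IsLowerSet s) (hS : S ≠ 0) :
    medHi S ∈ s ↔ S.card < 2 * S.countP (· ∈ s) := by
  have hcard : 0 < S.card := Multiset.card_pos.2 hS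
  rw [medHi, sort_getD_mem_iff_lt_countP hs (by omega)]
  omega

lemma medLo_le_iff (hS : S ≠ 0) : medLo S ≤ p ↔ S.card ≤ 2 * S.countP (· ≤ p) :=
  medLo_mem_iff (isLowerSet_Iic p) hS

lemma le_medHi_iff (hS : S ≠ 0) : p ≤ medHi S ↔ S.card ≤ 2 * S.countP (p ≤ ·) := by
  have hlt : medHi S < p ↔ S.card < 2 * S.countP (· < p) := medHi_mem_iff (isLowerSet_Iio p) hS
  have hsplit : S.card = S.countP (· < p) + S.countP (p ≤ ·) := by
    simpa only [not_lt] using Multiset.card_eq_countP_add_countP (· < p) S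
  rw [← not_lt, hlt]
  omega

lemma medLo_le_medHi (hS : S ≠ 0) : medLo S ≤ medHi S :=
  (medLo_le_iff hS).2 ((medHi_mem_iff (isLowerSet_Iic _) hS).1 Set.self_mem_Iic).le

lemma convexCombo_medLo_medHi_mem_Icc (hS : S ≠ 0) {β : ℝ} (hβ : β ∈ Set.Icc (0 : ℝ) 1) :
    β * medLo S + (1 - β) * medHi S ∈ Set.Icc (medLo S) (medHi S) :=
  convex_Icc _ _ (Set.left_mem_Icc.2 (medLo_le_medHi hS)) (Set.right_mem_Icc.2 (medLo_le_medHi hS))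
    hβ.1 (sub_nonneg.2 hβ.2) (add_sub_cancel _ _)

end Median

section Loss

variable {S : Multiset ℝ} {p q : ℝ}

lemma loss_map_neg (x : ℝ) (S : Multiset ℝ) : loss (-x) (S.map (- ·)) = loss x S := by
  simp only [loss, Multiset.map_map, Function.comp_def, neg_sub_neg, abs_sub_comm]

lemma mul_two_mul_countP_sub_card_le_loss_sub_loss (hpq : p ≤ q) (S : Multiset ℝ) :
    (q - p) * (2 * S.countP (· ≤ p) - S.card) ≤ loss q S - loss p S := by
  induction S using Multiset.induction_on with
  | empty => simp [loss]
  | cons a S ih =>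
    simp only [loss, Multiset.map_cons, Multiset.sum_cons, Multiset.card_cons,
      Multiset.countP_cons] at ih ⊢
    split_ifs with ha
    · rw [abs_of_nonneg (sub_nonneg.2 (ha.trans hpq)), abs_of_nonneg (sub_nonneg.2 ha)]
      push_cast
      linarith
    · have htriangle : |p - a| ≤ (q - p) + |q - a| := by
        rw [← abs_of_nonneg (sub_nonneg.2 hpq), abs_sub_comm q p]
        exact abs_sub_le p q a
      push_cast
      linarith

lemma loss_le_loss_of_card_le_two_mul_countP_le (hpq : p ≤ q)
    (hS : S.card ≤ 2 * S.countP (· ≤ p)) : loss p S ≤ loss q S := by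
  have hS' : (S.card : ℝ) ≤ 2 * S.countP (· ≤ p) := mod_cast hS
  have hnonneg := mul_nonneg (sub_nonneg.2 hpq) (sub_nonneg.2 hS')
  linarith [mul_two_mul_countP_sub_card_le_loss_sub_loss hpq S]

lemma loss_le_loss_of_card_le_two_mul_countP_ge (hqp : q ≤ p)
    (hS : S.card ≤ 2 * S.countP (p ≤ ·)) : loss p S ≤ loss q S := by
  rw [← loss_map_neg p, ← loss_map_neg q]
  refine loss_le_loss_of_card_le_two_mul_countP_le (neg_le_neg hqp) ?_
  simpa only [Multiset.card_map, Multiset.countP_map, neg_le_neg_iff,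
    ← Multiset.countP_eq_card_filter] using hS

lemma loss_le_loss_of_medLo_le (hS : S ≠ 0) (hp : medLo S ≤ p) (hpq : p ≤ q) :
    loss p S ≤ loss q S :=
  loss_le_loss_of_card_le_two_mul_countP_le hpq ((medLo_le_iff hS).1 hp)

lemma loss_le_loss_of_le_medHi (hS : S ≠ 0) (hp : p ≤ medHi S) (hqp : q ≤ p) :
    loss p S ≤ loss q S :=
  loss_le_loss_of_card_le_two_mul_countP_ge hqp ((le_medHi_iff hS).1 hp)

end Loss

section NthSmallest

variable {k : ℕ}

lemma nthSmallest_mem_iff {s : Set EReal} [DecidablePred (· ∈ s)] (hs : IsLowerSet s)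
    {M : Multiset EReal} (hk : 1 ≤ k) (hkM : k ≤ M.card) :
    nthSmallest M k ∈ s ↔ k ≤ M.countP (· ∈ s) := by
  rw [nthSmallest, sort_getD_mem_iff_lt_countP hs (by omega) 0]
  omega

variable {ι : Type*} [Fintype ι] {A : Multiset EReal} {y z : ι → EReal}

lemma nthSmallest_mem_of_forall_imp {s : Set EReal} (hs : IsLowerSet s) (hk : 1 ≤ k)
    (hkA : k ≤ Fintype.card ι + A.card) (hyz : ∀ i, y i ∈ s → z i ∈ s)
    (hy : nthSmallest (Finset.univ.val.map y + A) k ∈ s) :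
    nthSmallest (Finset.univ.val.map z + A) k ∈ s := by
  classical
  rw [nthSmallest_mem_iff hs hk (by simpa using hkA)] at hy ⊢
  refine hy.trans ?_
  simp only [Multiset.countP_add, Multiset.countP_map]
  gcongr ?_ + _
  exact Multiset.card_le_card (Multiset.monotone_filter_right _ hyz)

variable {C : Set ι}

lemma exists_mem_le_nthSmallest_of_lt (hk : 1 ≤ k) (hkA : k ≤ Fintype.card ι + A.card)
    (hyz : ∀ i ∉ C, y i = z i)
    (hlt : nthSmallest (Finset.univ.val.map y + A) k < nthSmallest (Finset.univ.val.map z + A) k) :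
    ∃ i ∈ C, y i ≤ nthSmallest (Finset.univ.val.map y + A) k := by
  by_contra! hC
  set c := nthSmallest (Finset.univ.val.map y + A) k
  have himp : ∀ i, y i ∈ Set.Iic c → z i ∈ Set.Iic c := fun i hi => by
    rwa [← hyz i fun hiC => (hC i hiC).not_ge hi]
  have hz : nthSmallest (Finset.univ.val.map z + A) k ∈ Set.Iic c :=
    nthSmallest_mem_of_forall_imp (isLowerSet_Iic c) hk hkA himp Set.self_mem_Iic
  exact hlt.not_ge hz

lemma exists_mem_nthSmallest_le_of_lt (hk : 1 ≤ k) (hkA : k ≤ Fintype.card ι + A.card)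
    (hyz : ∀ i ∉ C, y i = z i)
    (hlt : nthSmallest (Finset.univ.val.map z + A) k < nthSmallest (Finset.univ.val.map y + A) k) :
    ∃ i ∈ C, nthSmallest (Finset.univ.val.map y + A) k ≤ y i := by
  by_contra! hC
  set c := nthSmallest (Finset.univ.val.map y + A) k
  have himp : ∀ i, z i ∈ Set.Iio c → y i ∈ Set.Iio c := fun i hi => by
    by_cases hiC : i ∈ C
    · exact hC i hiC
    · rwa [hyz i hiC]
  have hy : c ∈ Set.Iio c := nthSmallest_mem_of_forall_imp (isLowerSet_Iio c) hk hkA himp hlt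
  exact lt_irrefl c hy

end NthSmallest

theorem stmt_9_general {n k : ℕ} (hk : 1 ≤ k) {A : Multiset EReal} (hkA : k ≤ n + A.card)
    {v : Fin n → Multiset ℝ → ℝ} (hv : ∀ i S, S ≠ 0 → v i S ∈ Set.Icc (medLo S) (medHi S))
    {π : (Fin n → Multiset ℝ) → ℝ}
    (hπ : ∀ D : Fin n → Multiset ℝ, (∀ j, D j ≠ 0) →
      (π D : EReal) = nthSmallest (Finset.univ.val.map (fun i => (v i (D i) : EReal)) + A) k) :
    GroupStrategyproof n π := by
  rintro ⟨C, D, D', ⟨j₀, hj₀⟩, hD, hD', hloss⟩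
  set E : Fin n → Multiset ℝ := fun j => if j ∈ C then D' j else D j with hE
  have hE_ne : ∀ j, E j ≠ 0 := fun j => by by_cases hj : j ∈ C <;> simp [hE, hj, hD, hD']
  have hvote : ∀ j ∉ (C : Set (Fin n)), (v j (D j) : EReal) = v j (E j) := fun j hj => by
    simp [hE, Finset.mem_coe.not.1 hj]
  have hkA' : k ≤ Fintype.card (Fin n) + A.card := by rwa [Fintype.card_fin]
  rcases lt_trichotomy (π D) (π E) with h | h | h
  · have hlt := EReal.coe_lt_coe_iff.2 h
    rw [hπ D hD, hπ E hE_ne] at hlt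
    obtain ⟨j, hj, hle⟩ := exists_mem_le_nthSmallest_of_lt hk hkA' hvote hlt
    rw [← hπ D hD, EReal.coe_le_coe_iff] at hle
    exact (hloss j hj).not_ge
      (loss_le_loss_of_medLo_le (hD j) ((hv j _ (hD j)).1.trans hle) h.le)
  · exact (hloss j₀ hj₀).ne (by rw [h])
  · have hlt := EReal.coe_lt_coe_iff.2 h
    rw [hπ D hD, hπ E hE_ne] at hlt
    obtain ⟨j, hj, hle⟩ := exists_mem_nthSmallest_le_of_lt hk hkA' hvote hlt
    rw [← hπ D hD, EReal.coe_le_coe_iff] at hle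
    exact (hloss j hj).not_ge
      (loss_le_loss_of_le_medHi (hD j) (hle.trans (hv j _ (hD j)).2) h.le)

/-- part of Theorem 4: every generalized-median mechanism
`π(D) = med(y_1*,…,y_n*,α_1,…,α_{n-1})` is group strategyproof w.r.t. manipulation,
replication and hiding. -/
theorem stmt_9 (n : ℕ) (hn : 1 ≤ n) (α : Fin (n - 1) → EReal) (β : ℝ)
    (hβ : β ∈ Set.Icc (0 : ℝ) 1) (π : (Fin n → Multiset ℝ) → ℝ)
    (hπ : ∀ D : Fin n → Multiset ℝ, (∀ j, D j ≠ 0) →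
      (π D : EReal) = medMech n α β D) :
    GroupStrategyproof n π :=
  stmt_9_general hn (Nat.le_add_right n _)
    (fun _ _ hS => convexCombo_medLo_medHi_mem_Icc hS hβ) hπ
end

section
/- Let n = 3, let β ∈ [0,1], and let α1 ≤ α2 be extended reals such that either α1 < α2, or α1 = α2 ∈ ℝ. Define the mechanism π on profiles D = (D_1,D_2,D_3) of nonempty finite multisets of reals by π(D) = med(y_1*,y_2*,y_3*,α1,α2), the 3rd smallest of these 5 extended-real values (always a real number), where y_i* = β·y_i^0 + (1−β)·y_i^1 and [y_i^0,y_i^1] = med(D_i). Then π is NOT strong group strategyproof w.r.t. manipulation, replication, and hiding: there exist a coalition S of agents, a profile D, and nonempty finite multisets (D_j′)_{j∈S} such that l(π(D_S′,D_{−S}), D_j) ≤ l(π(D), D_j) for every j ∈ S with strict inequality for some j ∈ S. -/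
/-!
The only profiles needed are `({p, q}, {w}, {z})` with `p ≤ w ≤ q`. Every point of `[p, q]` is
optimal for the first agent, so if the outcome on this profile is some `m ≠ w`, she can help the
second agent, at no cost to herself, by reporting `{w}`, provided that this moves the outcome to
`w`. Take `m` to be the value `β p + (1 - β) q` that the mechanism extracts from `{p, q}`. If
`α1 < α2`, put `m` and `w` in `[α1, α2]` and let `z = m`: the outcome is the value shared by two of
the three agents. If `α1 = α2 = r`, let `m = r` and `z = w`: the outcome is the value that occurs
three times among the five.
-/

open Function Set

section Loss

lemma loss_singleton (x w : ℝ) : loss x {w} = |x - w| := by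
  simp [loss]

lemma loss_pair (x p q : ℝ) : loss x {p, q} = |x - p| + |x - q| := by
  simp [loss]

lemma loss_pair_le_of_mem_Icc {p q x : ℝ} (hx : x ∈ Icc p q) (y : ℝ) :
    loss x {p, q} ≤ loss y {p, q} := by
  calc
    loss x {p, q} = |q - p| := by
      rw [loss_pair, abs_of_nonneg (sub_nonneg.2 hx.1), abs_of_nonpos (sub_nonpos.2 hx.2),
        abs_of_nonneg (sub_nonneg.2 (hx.1.trans hx.2))]
      ring
    _ ≤ |q - y| + |y - p| := abs_sub_le q y p
    _ = loss y {p, q} := by rw [loss_pair, abs_sub_comm q y, add_comm]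

end Loss

section Manipulation

variable {ι : Type*} [DecidableEq ι]

/-- The negation of strong group strategyproofness w.r.t. manipulation, replication and hiding:
some coalition `S`, reporting `D'` instead of its true data `D`, makes one of its members strictly
better off and none worse off. Only the values of `D'` on `S` matter. -/
def IsManipulable (π : (ι → Multiset ℝ) → ℝ) : Prop :=
  ∃ (S : Finset ι) (D D' : ι → Multiset ℝ),
    (∀ j, D j ≠ 0) ∧ (∀ j ∈ S, D' j ≠ 0) ∧
    (∀ j ∈ S, loss (π fun k => if k ∈ S then D' k else D k) (D j) ≤ loss (π D) (D j)) ∧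
    (∃ j ∈ S, loss (π fun k => if k ∈ S then D' k else D k) (D j) < loss (π D) (D j))

lemma isManipulable_of_update_eq {π : (ι → Multiset ℝ) → ℝ} {D : ι → Multiset ℝ}
    (hD : ∀ k, D k ≠ 0) {i j : ι} {p q w : ℝ} (hi : D i = {p, q}) (hj : D j = {w})
    (hw : w ∈ Icc p q) (hne : π D ≠ w) (hupdate : π (update D i {w}) = w) :
    IsManipulable π := by
  have hreport :
      (fun k => if k ∈ ({i, j} : Finset ι) then update D i {w} k else D k) = update D i {w} := by
    ext1 k
    by_cases hk : k = i <;> simp [hk]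
  have hgain : loss w (D j) < loss (π D) (D j) := by
    simpa [hj, loss_singleton, sub_eq_zero] using hne
  refine ⟨{i, j}, D, update D i {w}, hD, fun k _ => ?_, ?_, j, by simp, ?_⟩
  · rcases eq_or_ne k i with rfl | hk
    · simp
    · simpa [hk] using hD k
  · rw [hreport, hupdate]
    simp only [Finset.mem_insert, Finset.mem_singleton, forall_eq_or_imp, forall_eq]
    exact ⟨hi ▸ loss_pair_le_of_mem_Icc hw (π D), hgain.le⟩
  · rwa [hreport, hupdate]

end Manipulation

section WeightedMedian

/-- The value `y* = β y⁰ + (1 - β) y¹` that a mechanism with parameter `β` extracts from a multiset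
with median interval `[y⁰, y¹]`. -/
noncomputable def weightedMed (β : ℝ) (S : Multiset ℝ) : ℝ :=
  β * medLo S + (1 - β) * medHi S

lemma weightedMed_singleton (β x : ℝ) : weightedMed β {x} = x := by
  simp [weightedMed, medLo, medHi, ← add_mul]

lemma weightedMed_pair (β : ℝ) {p q : ℝ} (h : p ≤ q) :
    weightedMed β {p, q} = β * p + (1 - β) * q := by
  have hsort : (p ::ₘ {q}).sort (· ≤ ·) = [p, q] := by
    rw [Multiset.sort_cons _ _ _ (by simpa using h),
      Multiset.sort_singleton]
  simp [weightedMed, medLo, medHi, hsort]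

lemma exists_weightedMed_pair_eq (β m : ℝ) {ε : ℝ} (hε : 0 < ε) :
    ∃ p q w, w ∈ Icc p q ∧ weightedMed β {p, q} = m ∧ |w - m| = ε := by
  rcases lt_or_ge 0 β with hβ | hβ
  · have hle : m + ε - ε / β ≤ m + ε := sub_le_self _ (by positivity)
    refine ⟨m + ε - ε / β, m + ε, m + ε, ⟨hle, le_rfl⟩, ?_, by simp [hε.le]⟩
    rw [weightedMed_pair β hle]
    field_simp
    ring
  · have hβ' : 0 < 1 - β := by linarith
    have hle : m - ε ≤ m - ε + ε / (1 - β) := le_add_of_nonneg_right (by positivity)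
    refine ⟨m - ε, m - ε + ε / (1 - β), m - ε, ⟨le_rfl, hle⟩, ?_, by simp [hε.le]⟩
    rw [weightedMed_pair β hle]
    field_simp
    ring

end WeightedMedian

section OrderStatistics

lemma nthSmallest_add_cons {A B : Multiset EReal} {x : EReal} (hA : ∀ a ∈ A, a ≤ x)
    (hB : ∀ b ∈ B, x ≤ b) : nthSmallest (A + x ::ₘ B) (A.card + 1) = x := by
  have hsorted : (A.sort ++ x :: B.sort).Pairwise (· ≤ ·) := by
    simp only [List.pairwise_append, List.pairwise_cons, Multiset.pairwise_sort, List.mem_cons,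
      Multiset.mem_sort, forall_eq_or_imp, true_and, and_true]
    exact ⟨hB, fun a ha => ⟨hA a ha, fun b hb => (hA a ha).trans (hB b hb)⟩⟩
  have hcoe : A + x ::ₘ B = ↑(A.sort ++ x :: B.sort) := by
    rw [← Multiset.coe_add, ← Multiset.cons_coe, Multiset.sort_eq, Multiset.sort_eq]
  rw [nthSmallest, hcoe, Multiset.coe_sort, List.mergeSort_eq_self _ hsorted]
  simp

lemma nthSmallest_five_eq_of_le {a b c d x : EReal} (ha : a ≤ x) (hb : b ≤ x) (hc : x ≤ c)
    (hd : x ≤ d) : nthSmallest {a, b, x, c, d} 3 = x :=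
  nthSmallest_add_cons (A := {a, b}) (B := {c, d}) (by simp [ha, hb]) (by simp [hc, hd])

lemma nthSmallest_five_eq_of_twice {a b x : EReal} (ha : a ≤ x) (hb : x ≤ b) (z : EReal) :
    nthSmallest {x, x, z, a, b} 3 = x := by
  rcases le_total z x with hz | hz
  · have hperm : ({x, x, z, a, b} : Multiset EReal) = {a, z, x, x, b} := by
      simp only [Multiset.insert_eq_cons, ← Multiset.singleton_add]
      abel
    rw [hperm, nthSmallest_five_eq_of_le ha hz le_rfl hb]
  · have hperm : ({x, x, z, a, b} : Multiset EReal) = {a, x, x, z, b} := by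
      simp only [Multiset.insert_eq_cons, ← Multiset.singleton_add]
      abel
    rw [hperm, nthSmallest_five_eq_of_le ha le_rfl hz hb]

lemma nthSmallest_five_eq_of_thrice (x y : EReal) : nthSmallest {x, x, x, y, y} 3 = x := by
  rcases le_total x y with h | h
  · exact nthSmallest_five_eq_of_le le_rfl le_rfl h h
  · have hperm : ({x, x, x, y, y} : Multiset EReal) = {y, y, x, x, x} := by
      simp only [Multiset.insert_eq_cons, ← Multiset.singleton_add]
      abel
    rw [hperm, nthSmallest_five_eq_of_le h h le_rfl le_rfl]

end OrderStatistics

section PhantomMedian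

/-- `π` is the generalized median mechanism with parameter `β` and phantom voters `P`: its outcome
is the `n`-th smallest among the extracted values of the `n` agents and the members of `P`. The
paper takes `n - 1` phantoms, so that this is a median. The outcome is prescribed only on profiles
of nonempty multisets. -/
def IsPhantomMedian {ι : Type*} [Fintype ι] (β : ℝ) (P : Multiset EReal)
    (π : (ι → Multiset ℝ) → ℝ) : Prop :=
  ∀ D : ι → Multiset ℝ, (∀ j, D j ≠ 0) →
    (π D : EReal) =
      nthSmallest ((Finset.univ.val.map fun i => (weightedMed β (D i) : EReal)) + P)
        (Fintype.card ι)

variable {β : ℝ} {P : Multiset EReal} {π : (Fin 3 → Multiset ℝ) → ℝ}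

lemma IsPhantomMedian.apply_fin_three (hπ : IsPhantomMedian β P π) {A B C : Multiset ℝ}
    (hA : A ≠ 0) (hB : B ≠ 0) (hC : C ≠ 0) {x : ℝ}
    (hx : nthSmallest (weightedMed β A ::ₘ weightedMed β B ::ₘ weightedMed β C ::ₘ P) 3 = x) :
    π ![A, B, C] = x := by
  have hvalues : (Finset.univ.val.map fun i => (weightedMed β (![A, B, C] i) : EReal)) =
      {↑(weightedMed β A), ↑(weightedMed β B), ↑(weightedMed β C)} := rfl
  have hmedian := hπ ![A, B, C] (by simp [Fin.forall_fin_succ, *])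
  rw [hvalues, Fintype.card_fin] at hmedian
  simp only [Multiset.insert_eq_cons, Multiset.cons_add, Multiset.singleton_add] at hmedian
  exact EReal.coe_injective (hmedian.trans hx)

lemma IsPhantomMedian.isManipulable_of_nthSmallest_eq (hπ : IsPhantomMedian β P π)
    {p q m w z : ℝ} (hw : w ∈ Icc p q) (hm : weightedMed β {p, q} = m) (hmw : m ≠ w)
    (hbefore : nthSmallest (m ::ₘ w ::ₘ z ::ₘ P) 3 = m)
    (hafter : nthSmallest (w ::ₘ w ::ₘ z ::ₘ P) 3 = w) : IsManipulable π := by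
  have houtcome : π ![{p, q}, {w}, {z}] = m :=
    hπ.apply_fin_three (by simp) (by simp) (by simp) (by simpa only [weightedMed_singleton, hm])
  have houtcome' : π ![{w}, {w}, {z}] = w :=
    hπ.apply_fin_three (by simp) (by simp) (by simp) (by simpa only [weightedMed_singleton])
  refine isManipulable_of_update_eq (D := ![{p, q}, {w}, {z}]) (i := 0) (j := 1)
    (by simp [Fin.forall_fin_succ]) rfl rfl hw (houtcome.trans_ne hmw) ?_
  exact (congrArg π (Fin.update_cons_zero _ _ _)).trans houtcome'

lemma IsPhantomMedian.isManipulable_of_lt {α1 α2 : EReal} (hπ : IsPhantomMedian β {α1, α2} π)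
    (hα : α1 < α2) : IsManipulable π := by
  obtain ⟨a, ha, haα⟩ := EReal.lt_iff_exists_real_btwn.1 hα
  obtain ⟨b, hab, hb⟩ := EReal.lt_iff_exists_real_btwn.1 haα
  have hε : 0 < (b - a) / 2 := half_pos (sub_pos.2 (EReal.coe_lt_coe_iff.1 hab))
  have hbetween {x : ℝ} (hx : |x - (a + b) / 2| ≤ (b - a) / 2) : α1 ≤ x ∧ x ≤ α2 := by
    obtain ⟨hax, hxb⟩ := abs_le.1 hx
    exact ⟨ha.le.trans (EReal.coe_le_coe_iff.2 (by linarith)),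
      (EReal.coe_le_coe_iff.2 (by linarith)).trans hb.le⟩
  obtain ⟨p, q, w, hw, hm, hwm⟩ := exists_weightedMed_pair_eq β ((a + b) / 2) hε
  have hmw : (a + b) / 2 ≠ w := by
    rintro rfl
    simp [hε.ne] at hwm
  set m := (a + b) / 2
  obtain ⟨hαm, hmα⟩ : α1 ≤ m ∧ m ≤ α2 := hbetween (by simpa using hε.le)
  obtain ⟨hαw, hwα⟩ : α1 ≤ w ∧ w ≤ α2 := hbetween hwm.le
  refine hπ.isManipulable_of_nthSmallest_eq (z := m) hw hm hmw ?_ ?_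
  · rw [Multiset.cons_swap (w : EReal)]
    exact nthSmallest_five_eq_of_twice hαm hmα w
  · exact nthSmallest_five_eq_of_twice hαw hwα m

lemma IsPhantomMedian.isManipulable_of_coe_eq {r : ℝ} (hπ : IsPhantomMedian β {↑r, ↑r} π) :
    IsManipulable π := by
  obtain ⟨p, q, w, hw, hm, hwr⟩ := exists_weightedMed_pair_eq β r one_pos
  have hrw : r ≠ w := by
    rintro rfl
    simp at hwr
  refine hπ.isManipulable_of_nthSmallest_eq (z := w) hw hm hrw ?_
    (nthSmallest_five_eq_of_thrice w r)
  have hperm : (r ::ₘ w ::ₘ w ::ₘ {↑r, ↑r} : Multiset EReal) = {↑r, ↑r, ↑r, ↑w, ↑w} := by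
    simp only [Multiset.insert_eq_cons, ← Multiset.singleton_add]
    abel
  rw [hperm, nthSmallest_five_eq_of_thrice]

end PhantomMedian

theorem stmt_13_general {β : ℝ} {α1 α2 : EReal}
    (hα : α1 < α2 ∨ (α1 = α2 ∧ ∃ r : ℝ, α1 = r)) {π : (Fin 3 → Multiset ℝ) → ℝ}
    (hπ : IsPhantomMedian β {α1, α2} π) : IsManipulable π := by
  rcases hα with hlt | ⟨rfl, r, rfl⟩
  · exact hπ.isManipulable_of_lt hlt
  · exact hπ.isManipulable_of_coe_eq

/-- Example 2: for `n = 3`, any generalized-median mechanism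
`π(D) = med(y_1*,y_2*,y_3*,α1,α2)` with `α1 < α2`, or `α1 = α2` finite, is NOT strong
group strategyproof w.r.t. manipulation, replication and hiding. -/
theorem stmt_13 (β : ℝ) (hβ : β ∈ Set.Icc (0 : ℝ) 1) (α1 α2 : EReal) (hα : α1 ≤ α2)
    (hcase : α1 < α2 ∨ (α1 = α2 ∧ ∃ r : ℝ, α1 = (r : EReal)))
    (π : (Fin 3 → Multiset ℝ) → ℝ)
    (hπ : ∀ D : Fin 3 → Multiset ℝ, (∀ j, D j ≠ 0) →
      (π D : EReal) =
        nthSmallest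
          ((Finset.univ.val.map fun i : Fin 3 =>
              ((β * medLo (D i) + (1 - β) * medHi (D i) : ℝ) : EReal)) +
            {α1, α2}) 3) :
    ∃ (S : Finset (Fin 3)) (D D' : Fin 3 → Multiset ℝ),
      (∀ j, D j ≠ 0) ∧ (∀ j ∈ S, D' j ≠ 0) ∧
      (∀ j ∈ S, loss (π fun k => if k ∈ S then D' k else D k) (D j)
          ≤ loss (π D) (D j)) ∧
      (∃ j ∈ S, loss (π fun k => if k ∈ S then D' k else D k) (D j)
          < loss (π D) (D j)) :=
  stmt_13_general hcase hπ
end
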